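/- There exists a constant M > 0, depending only on A and C₀, such that for every t ≥ 0 one has β² ∫₀ᵗ ‖u(s,·)∂ₓ²u(s,·)‖²_{L²(ℝ)} ds ≤ M ε³. -/

import Mathlib

open MeasureTheory
open scoped ContDiff

namespace KS

lemma hasDx {f : ℝ → ℝ → ℝ} (hf : ContDiff ℝ ∞ (Function.uncurry f)) (t x : ℝ) :
    HasDerivAt (f t) (fderiv ℝ (Function.uncurry f) (t, x) (0, 1)) x := by
  have h1 : HasFDerivAt (Function.uncurry f) (fderiv ℝ (Function.uncurry f) (t, x)) (t, x) :=
    ((hf.differentiable (by simp)) (t, x)).hasFDerivAt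
  have h2 : HasDerivAt (fun y : ℝ => (t, y)) ((0 : ℝ), (1 : ℝ)) x :=
    (hasDerivAt_const x t).prodMk (hasDerivAt_id x)
  exact h1.comp_hasDerivAt x h2

lemma hasDt {f : ℝ → ℝ → ℝ} (hf : ContDiff ℝ ∞ (Function.uncurry f)) (t x : ℝ) :
    HasDerivAt (fun τ => f τ x) (fderiv ℝ (Function.uncurry f) (t, x) (1, 0)) t := by
  have h1 : HasFDerivAt (Function.uncurry f) (fderiv ℝ (Function.uncurry f) (t, x)) (t, x) :=
    ((hf.differentiable (by simp)) (t, x)).hasFDerivAt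
  have h2 : HasDerivAt (fun y : ℝ => (y, x)) ((1 : ℝ), (0 : ℝ)) t :=
    (hasDerivAt_id t).prodMk (hasDerivAt_const t x)
  exact h1.comp_hasDerivAt t h2

lemma smooth_dir {f : ℝ → ℝ → ℝ} (hf : ContDiff ℝ ∞ (Function.uncurry f)) (e : ℝ × ℝ) :
    ContDiff ℝ ∞ (fun z => fderiv ℝ (Function.uncurry f) z e) :=
  (hf.fderiv_right (m := ∞) (by simp)).clm_apply contDiff_const

/-- space derivative -/
noncomputable def dx (f : ℝ → ℝ → ℝ) : ℝ → ℝ → ℝ := fun t x => deriv (f t) x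
/-- time derivative -/
noncomputable def dt (f : ℝ → ℝ → ℝ) : ℝ → ℝ → ℝ := fun t x => deriv (fun τ => f τ x) t

lemma dx_eq {f : ℝ → ℝ → ℝ} (hf : ContDiff ℝ ∞ (Function.uncurry f)) :
    Function.uncurry (dx f) = fun z => fderiv ℝ (Function.uncurry f) z (0, 1) := by
  funext ⟨t, x⟩
  exact (hasDx hf t x).deriv

lemma dt_eq {f : ℝ → ℝ → ℝ} (hf : ContDiff ℝ ∞ (Function.uncurry f)) :
    Function.uncurry (dt f) = fun z => fderiv ℝ (Function.uncurry f) z (1, 0) := by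
  funext ⟨t, x⟩
  exact (hasDt hf t x).deriv

lemma dx_smooth {f : ℝ → ℝ → ℝ} (hf : ContDiff ℝ ∞ (Function.uncurry f)) :
    ContDiff ℝ ∞ (Function.uncurry (dx f)) := by
  rw [dx_eq hf]; exact smooth_dir hf _

lemma dt_smooth {f : ℝ → ℝ → ℝ} (hf : ContDiff ℝ ∞ (Function.uncurry f)) :
    ContDiff ℝ ∞ (Function.uncurry (dt f)) := by
  rw [dt_eq hf]; exact smooth_dir hf _

lemma hdx {f : ℝ → ℝ → ℝ} (hf : ContDiff ℝ ∞ (Function.uncurry f)) (t x : ℝ) :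
    HasDerivAt (f t) (dx f t x) x := (hasDx hf t x).differentiableAt.hasDerivAt

lemma hdt {f : ℝ → ℝ → ℝ} (hf : ContDiff ℝ ∞ (Function.uncurry f)) (t x : ℝ) :
    HasDerivAt (fun τ => f τ x) (dt f t x) t := (hasDt hf t x).differentiableAt.hasDerivAt

lemma dxdt {f : ℝ → ℝ → ℝ} (hf : ContDiff ℝ ∞ (Function.uncurry f)) (t x : ℝ) :
    dt (dx f) t x = dx (dt f) t x := by
  have h1 : dt (dx f) t x = fderiv ℝ (Function.uncurry (dx f)) (t, x) (1, 0) :=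
    (hasDt (dx_smooth hf) t x).deriv
  have h2 : dx (dt f) t x = fderiv ℝ (Function.uncurry (dt f)) (t, x) (0, 1) :=
    (hasDx (dt_smooth hf) t x).deriv
  have hd : DifferentiableAt ℝ (fderiv ℝ (Function.uncurry f)) (t, x) :=
    ((hf.fderiv_right (m := ∞) (by simp)).differentiable (by simp)) _
  rw [h1, h2, dx_eq hf, dt_eq hf]
  have e : ∀ v w : ℝ × ℝ, fderiv ℝ (fun z => fderiv ℝ (Function.uncurry f) z v) (t, x) w
      = fderiv ℝ (fderiv ℝ (Function.uncurry f)) (t, x) w v := by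
    intro v w
    rw [fderiv_clm_apply hd (differentiableAt_const v)]
    simp
  rw [e, e]
  have hs : IsSymmSndFDerivAt ℝ (Function.uncurry f) (t, x) :=
    (hf.contDiffAt).isSymmSndFDerivAt (by simp; exact WithTop.coe_le_coe.2 (le_top : (2 : ℕ∞) ≤ ⊤))
  exact hs.eq _ _

lemma hasDeriv_int {f : ℝ → ℝ → ℝ} (hf : ContDiff ℝ ∞ (Function.uncurry f)) (a b t : ℝ) :
    HasDerivAt (fun t => ∫ x in a..b, f t x) (∫ x in a..b, dt f t x) t := by
  have hc : Continuous (Function.uncurry (dt f)) := (dt_smooth hf).continuous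
  obtain ⟨K, hK⟩ := ((isCompact_Icc (a := t - 1) (b := t + 1)).prod
    (isCompact_uIcc (a := a) (b := b))).exists_bound_of_continuousOn hc.continuousOn
  have hfc := hf.continuous
  refine (intervalIntegral.hasDerivAt_integral_of_dominated_loc_of_deriv_le
    (F := f) (F' := dt f) (bound := fun _ => K) (s := Metric.ball t 1) (Metric.ball_mem_nhds t one_pos)
    ?_ ?_ ?_ ?_ ?_ ?_).2
  · refine Filter.Eventually.of_forall fun s => ?_
    exact (hfc.comp (by fun_prop : Continuous fun x : ℝ => (s, x))).aestronglyMeasurable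
  · exact (hfc.comp (by fun_prop : Continuous fun x : ℝ => (t, x))).intervalIntegrable _ _
  · exact (hc.comp (by fun_prop : Continuous fun x : ℝ => (t, x))).aestronglyMeasurable
  · refine Filter.Eventually.of_forall fun x hx s hs => ?_
    refine hK (s, x) ⟨?_, Set.uIoc_subset_uIcc hx⟩
    rw [Metric.mem_ball, Real.dist_eq, abs_lt] at hs
    constructor <;> linarith [hs.1, hs.2]
  · exact intervalIntegrable_const
  · refine Filter.Eventually.of_forall fun x hx s hs => hdt hf s x

lemma cont_int {f : ℝ → ℝ → ℝ} (hf : Continuous (Function.uncurry f)) (a b : ℝ) :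
    Continuous (fun t => ∫ x in a..b, f t x) :=
  intervalIntegral.continuous_parametric_intervalIntegral_of_continuous' hf a b

/-- Energy identity: the time derivative of `∫ f` when `∂ₜ f = g + W'` with `W` vanishing at the ends. -/
lemma energy {f : ℝ → ℝ → ℝ} (hf : ContDiff ℝ ∞ (Function.uncurry f)) (a b t : ℝ)
    (g W W' : ℝ → ℝ) (hg : Continuous g) (hW : ∀ x, HasDerivAt W (W' x) x) (hW' : Continuous W')
    (ha : W a = 0) (hb : W b = 0) (h : ∀ x, dt f t x = g x + W' x) :
    HasDerivAt (fun t => ∫ x in a..b, f t x) (∫ x in a..b, g x) t := by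
  convert hasDeriv_int hf a b t using 1
  simp_rw [h]
  rw [intervalIntegral.integral_add (hg.intervalIntegrable _ _) (hW'.intervalIntegrable _ _),
    intervalIntegral.integral_eq_sub_of_hasDerivAt (fun x _ => hW x) (hW'.intervalIntegrable _ _),
    ha, hb]
  simp

lemma dx_zero {f : ℝ → ℝ → ℝ} {R : ℝ} (h : ∀ t x : ℝ, R < |x| → f t x = 0) :
    ∀ t x : ℝ, R < |x| → dx f t x = 0 := by
  intro t x hx
  have : f t =ᶠ[nhds x] fun _ => 0 := by
    filter_upwards [(isOpen_lt continuous_const continuous_abs).mem_nhds hx] with y hy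
    exact h t y hy
  unfold dx
  rw [this.deriv_eq]; simp

lemma int_eq {f : ℝ → ℝ} {L : ℝ} (h : ∀ x : ℝ, L ≤ |x| → f x = 0) :
    ∫ x, f x = ∫ x in (-L)..L, f x := by
  rw [intervalIntegral.integral_eq_integral_of_support_subset]
  intro x hx
  by_contra hc
  apply hx
  apply h
  by_contra hlt
  push Not at hlt
  rw [abs_lt] at hlt
  exact hc ⟨hlt.1, hlt.2.le⟩

/-- Sup bound -/
lemma sup_bound {p q : ℝ → ℝ} {L l : ℝ} (hl : 0 < l) (hp : ∀ x, HasDerivAt p (q x) x)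
    (hq : Continuous q) (h0 : ∀ x : ℝ, L ≤ |x| → p x = 0) (hL : 0 < L) (x : ℝ) :
    p x ^ 2 ≤ l * (∫ x in (-L)..L, p x ^ 2) + (1 / l) * (∫ x in (-L)..L, q x ^ 2) := by
  have hpc : Continuous p := continuous_iff_continuousAt.2 fun x => (hp x).continuousAt
  rw [← intervalIntegral.integral_const_mul, ← intervalIntegral.integral_const_mul,
    ← intervalIntegral.integral_add ((by fun_prop : Continuous _).intervalIntegrable _ _)
      ((by fun_prop : Continuous _).intervalIntegrable _ _)]
  have hnn : ∀ y, 0 ≤ l * p y ^ 2 + 1 / l * q y ^ 2 := fun y => by positivity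
  by_cases hx : L ≤ |x|
  · rw [h0 x hx]
    simp only [ne_eq, OfNat.ofNat_ne_zero, not_false_eq_true, zero_pow]
    exact intervalIntegral.integral_nonneg (by linarith) fun y _ => hnn y
  · push Not at hx
    rw [abs_lt] at hx
    have h1 : ∫ y in (-L)..x, 2 * p y * q y = p x ^ 2 := by
      rw [intervalIntegral.integral_eq_sub_of_hasDerivAt (f := fun y => p y ^ 2)
        (fun y _ => by simpa using (hp y).fun_pow 2) ((by fun_prop : Continuous _).intervalIntegrable _ _),
        h0 (-L) (by rw [abs_neg]; exact le_abs_self L)]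
      simp
    rw [← h1]
    calc _ ≤ ∫ y in (-L)..x, (l * p y ^ 2 + 1 / l * q y ^ 2) := by
          refine intervalIntegral.integral_mono_on hx.1.le
            ((by fun_prop : Continuous _).intervalIntegrable _ _)
            ((by fun_prop : Continuous _).intervalIntegrable _ _) fun y _ => ?_
          have : l * p y ^ 2 + 1 / l * q y ^ 2 - 2 * p y * q y = (l * p y - q y) ^ 2 / l := by
            field_simp; ring
          have h2 : 0 ≤ (l * p y - q y) ^ 2 / l := by positivity
          linarith
      _ ≤ _ := by
          refine intervalIntegral.integral_mono_interval le_rfl hx.1.le hx.2.le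
            (Filter.Eventually.of_forall fun y => hnn y)
            ((by fun_prop : Continuous _).intervalIntegrable _ _)

/-- integrate a differential inequality -/
lemma integrate {Φ Φ' h : ℝ → ℝ} {t : ℝ} (ht : 0 ≤ t) (hΦ : ∀ s, 0 ≤ s → HasDerivAt Φ (Φ' s) s)
    (hh : Continuous h) (hle : ∀ s, 0 ≤ s → Φ' s ≤ - h s) :
    Φ t + ∫ s in (0:ℝ)..t, h s ≤ Φ 0 := by
  have hd : ∀ s, 0 ≤ s → HasDerivAt (fun s => Φ s + ∫ r in (0:ℝ)..s, h r) (Φ' s + h s) s :=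
    fun s hs => (hΦ s hs).add (hh.integral_hasStrictDerivAt 0 s).hasDerivAt
  have := antitoneOn_of_hasDerivWithinAt_nonpos (convex_Icc 0 t)
    (f := fun s => Φ s + ∫ r in (0:ℝ)..s, h r) (f' := fun s => Φ' s + h s)
    (fun s hs => (hd s hs.1).continuousAt.continuousWithinAt)
    (fun s hs => (hd s (interior_subset hs).1).hasDerivWithinAt)
    (fun s hs => by have := hle s (interior_subset hs).1; linarith)
  simpa using this (Set.left_mem_Icc.2 ht) (Set.right_mem_Icc.2 ht) ht

/-- Bootstrap -/
lemma bootstrap {Φ Φ' : ℝ → ℝ} {F₀ : ℝ} (hF : 0 < F₀) (hΦ : ∀ s, 0 ≤ s → HasDerivAt Φ (Φ' s) s)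
    (h0 : Φ 0 ≤ F₀) (h : ∀ s, 0 ≤ s → Φ s ≤ 2 * F₀ → Φ' s ≤ 0) :
    ∀ t, 0 ≤ t → Φ t ≤ 2 * F₀ := by
  intro t ht
  have key := image_le_of_deriv_right_lt_deriv_boundary (f := Φ) (f' := Φ') (a := 0) (b := t)
    (B := fun s => F₀ + F₀ / (t + 1) * s) (B' := fun _ => F₀ / (t + 1))
    (fun s hs => (hΦ s hs.1).continuousAt.continuousWithinAt)
    (fun s hs => (hΦ s hs.1).hasDerivWithinAt) (by simpa using h0)
    (fun s => by simpa using ((hasDerivAt_id s).const_mul (F₀ / (t + 1))).const_add F₀)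
  have hB : ∀ s ∈ Set.Icc 0 t, F₀ + F₀ / (t + 1) * s ≤ 2 * F₀ := by
    intro s hs
    have : F₀ / (t + 1) * s ≤ F₀ := by
      rw [div_mul_eq_mul_div, div_le_iff₀ (by linarith)]
      nlinarith [hs.2]
    linarith
  have := key (fun s hs he => by
    have h1 : 0 < F₀ / (t + 1) := by positivity
    have := h s hs.1 (by rw [he]; exact hB s ⟨hs.1, hs.2.le⟩)
    linarith) (Set.right_mem_Icc.2 ht)
  exact this.trans (hB t (Set.right_mem_Icc.2 ht))


lemma fix_t {f : ℝ → ℝ → ℝ} (hf : ContDiff ℝ ∞ (Function.uncurry f)) (t : ℝ) :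
    Continuous (f t) :=
  hf.continuous.comp (by fun_prop : Continuous fun x : ℝ => (t, x))

/-- the equation, solved for the time derivative -/
def Sol (A ε β : ℝ) (u : ℝ → ℝ → ℝ) : Prop := ∀ t : ℝ, 0 ≤ t → ∀ x : ℝ,
  dt u t x = -(A * u t x * dx u t x + β * dx (dx (dx u)) t x
    - (A / 3) * β * (dx u t x * dx (dx u) t x) - (2 * A / 3) * β * (u t x * dx (dx (dx u)) t x)
    - ε * dx (dx u) t x)

lemma energy1 {A ε β L : ℝ} {u : ℝ → ℝ → ℝ} (hu : ContDiff ℝ ∞ (Function.uncurry u))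
    (hs : Sol A ε β u) (z0 : ∀ t x : ℝ, L ≤ |x| → u t x = 0)
    (z1 : ∀ t x : ℝ, L ≤ |x| → dx u t x = 0) (z2 : ∀ t x : ℝ, L ≤ |x| → dx (dx u) t x = 0)
    (t : ℝ) (ht : 0 ≤ t) :
    HasDerivAt (fun t => ∫ x in (-L)..L, (u t x ^ 2 + β * dx u t x ^ 2))
      (∫ x in (-L)..L, -(2 * ε * dx u t x ^ 2 + 2 * β * ε * dx (dx u) t x ^ 2)) t := by
  have hq := dx_smooth hu
  have hr := dx_smooth hq
  have hw := dx_smooth hr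
  have hv := dt_smooth hu
  have hvx := dx_smooth hv
  have cp := fix_t hu t
  have cq := fix_t hq t
  have cr := fix_t hr t
  have cw := fix_t hw t
  have cv := fix_t hv t
  have cvx := fix_t hvx t
  have bL : L ≤ |L| := le_abs_self L
  have bL' : L ≤ |-L| := by rw [abs_neg]; exact le_abs_self L
  refine energy (W := fun x => 2 * β * (dx u t x * dt u t x) + (-(2 * A / 3)) * u t x ^ 3
      + (-2 * β) * (u t x * dx (dx u) t x) + β * dx u t x ^ 2
      + (4 * A / 3) * β * (u t x ^ 2 * dx (dx u) t x) + 2 * ε * (u t x * dx u t x)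
      + β ^ 2 * dx (dx u) t x ^ 2 + (-(2 * A / 3) * β ^ 2) * (u t x * dx (dx u) t x ^ 2))
    (f := fun t x => u t x ^ 2 + β * dx u t x ^ 2)
    (W' := fun x => 2 * β * (dx (dx u) t x * dt u t x + dx u t x * dx (dt u) t x)
      + (-(2 * A / 3)) * (3 * u t x ^ 2 * dx u t x)
      + (-2 * β) * (dx u t x * dx (dx u) t x + u t x * dx (dx (dx u)) t x)
      + β * (2 * dx u t x * dx (dx u) t x)
      + (4 * A / 3) * β * (2 * u t x * dx u t x * dx (dx u) t x + u t x ^ 2 * dx (dx (dx u)) t x)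
      + 2 * ε * (dx u t x * dx u t x + u t x * dx (dx u) t x)
      + β ^ 2 * (2 * dx (dx u) t x * dx (dx (dx u)) t x)
      + (-(2 * A / 3) * β ^ 2) * (dx u t x * dx (dx u) t x ^ 2
        + u t x * (2 * dx (dx u) t x * dx (dx (dx u)) t x)))
    ?_ _ _ _ _ ?_ ?_ ?_ ?_ ?_ ?_
  · exact (ContDiff.pow hu 2).add (contDiff_const.mul (ContDiff.pow hq 2))
  · fun_prop
  · intro x
    have dp := hdx hu t x
    have dq := hdx hq t x
    have dr := hdx hr t x
    have dv := hdx hv t x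
    refine HasDerivAt.congr_deriv (((((((((dq.fun_mul dv).const_mul (2 * β)).fun_add
      ((dp.fun_pow 3).const_mul (-(2 * A / 3)))).fun_add
      ((dp.fun_mul dr).const_mul (-2 * β))).fun_add
      ((dq.fun_pow 2).const_mul β)).fun_add
      (((dp.fun_pow 2).fun_mul dr).const_mul ((4 * A / 3) * β))).fun_add
      ((dp.fun_mul dq).const_mul (2 * ε))).fun_add
      ((dr.fun_pow 2).const_mul (β ^ 2))).fun_add
      ((dp.fun_mul (dr.fun_pow 2)).const_mul (-(2 * A / 3) * β ^ 2))) ?_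
    norm_num
  · fun_prop
  · simp [z0 t _ bL', z1 t _ bL', z2 t _ bL']
  · simp [z0 t _ bL, z1 t _ bL, z2 t _ bL]
  · intro x
    have h1 := ((hdt hu t x).fun_pow 2).fun_add (((hdt hq t x).fun_pow 2).const_mul β)
    have h2 : dt (fun t x => u t x ^ 2 + β * dx u t x ^ 2) t x = _ := h1.deriv
    rw [h2, dxdt hu, hs t ht x]
    norm_num
    ring

lemma energy2 {A ε β L a : ℝ} {u : ℝ → ℝ → ℝ} (hu : ContDiff ℝ ∞ (Function.uncurry u))
    (hs : Sol A ε β u) (z0 : ∀ t x : ℝ, L ≤ |x| → u t x = 0)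
    (z1 : ∀ t x : ℝ, L ≤ |x| → dx u t x = 0) (z2 : ∀ t x : ℝ, L ≤ |x| → dx (dx u) t x = 0)
    (t : ℝ) (ht : 0 ≤ t) :
    HasDerivAt (fun t => ∫ x in (-L)..L, (a * u t x ^ 4 + ε ^ 2 * dx u t x ^ 2))
      (∫ x in (-L)..L, (2 * A * ε ^ 2 * (u t x * dx u t x * dx (dx u) t x)
        + 12 * a * β * (u t x ^ 2 * dx u t x * dx (dx u) t x)
        - 28 / 3 * a * A * β * (u t x ^ 3 * dx u t x * dx (dx u) t x)
        - 12 * a * ε * (u t x * dx u t x) ^ 2 - 2 * ε ^ 3 * dx (dx u) t x ^ 2)) t := by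
  have hq := dx_smooth hu
  have hr := dx_smooth hq
  have hw := dx_smooth hr
  have hv := dt_smooth hu
  have hvx := dx_smooth hv
  have cp := fix_t hu t
  have cq := fix_t hq t
  have cr := fix_t hr t
  have cw := fix_t hw t
  have cv := fix_t hv t
  have cvx := fix_t hvx t
  have bL : L ≤ |L| := le_abs_self L
  have bL' : L ≤ |-L| := by rw [abs_neg]; exact le_abs_self L
  refine energy (W := fun x => 2 * ε ^ 2 * (dx u t x * dt u t x) + (-(4 * a * A / 5)) * u t x ^ 5
      + (-4 * a * β) * (u t x ^ 3 * dx (dx u) t x)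
      + (8 * a * A / 3) * β * (u t x ^ 4 * dx (dx u) t x) + 4 * a * ε * (u t x ^ 3 * dx u t x)
      + ε ^ 2 * β * dx (dx u) t x ^ 2
      + (-(2 * A / 3) * ε ^ 2 * β) * (u t x * dx (dx u) t x ^ 2))
    (f := fun t x => a * u t x ^ 4 + ε ^ 2 * dx u t x ^ 2)
    (W' := fun x => 2 * ε ^ 2 * (dx (dx u) t x * dt u t x + dx u t x * dx (dt u) t x)
      + (-(4 * a * A / 5)) * (5 * u t x ^ 4 * dx u t x)
      + (-4 * a * β) * (3 * u t x ^ 2 * dx u t x * dx (dx u) t x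
        + u t x ^ 3 * dx (dx (dx u)) t x)
      + (8 * a * A / 3) * β * (4 * u t x ^ 3 * dx u t x * dx (dx u) t x
        + u t x ^ 4 * dx (dx (dx u)) t x)
      + 4 * a * ε * (3 * u t x ^ 2 * dx u t x * dx u t x + u t x ^ 3 * dx (dx u) t x)
      + ε ^ 2 * β * (2 * dx (dx u) t x * dx (dx (dx u)) t x)
      + (-(2 * A / 3) * ε ^ 2 * β) * (dx u t x * dx (dx u) t x ^ 2
        + u t x * (2 * dx (dx u) t x * dx (dx (dx u)) t x)))
    ?_ _ _ _ _ ?_ ?_ ?_ ?_ ?_ ?_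
  · exact (contDiff_const.mul (ContDiff.pow hu 4)).add (contDiff_const.mul (ContDiff.pow hq 2))
  · fun_prop
  · intro x
    have dp := hdx hu t x
    have dq := hdx hq t x
    have dr := hdx hr t x
    have dv := hdx hv t x
    refine HasDerivAt.congr_deriv ((((((((dq.fun_mul dv).const_mul (2 * ε ^ 2)).fun_add
      ((dp.fun_pow 5).const_mul (-(4 * a * A / 5)))).fun_add
      (((dp.fun_pow 3).fun_mul dr).const_mul (-4 * a * β))).fun_add
      (((dp.fun_pow 4).fun_mul dr).const_mul ((8 * a * A / 3) * β))).fun_add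
      (((dp.fun_pow 3).fun_mul dq).const_mul (4 * a * ε))).fun_add
      ((dr.fun_pow 2).const_mul (ε ^ 2 * β))).fun_add
      ((dp.fun_mul (dr.fun_pow 2)).const_mul (-(2 * A / 3) * ε ^ 2 * β))) ?_
    norm_num
  · fun_prop
  · simp [z0 t _ bL', z1 t _ bL', z2 t _ bL']
  · simp [z0 t _ bL, z1 t _ bL, z2 t _ bL]
  · intro x
    have h1 := (((hdt hu t x).fun_pow 4).const_mul a).fun_add
      (((hdt hq t x).fun_pow 2).const_mul (ε ^ 2))
    have h2 : dt (fun t x => a * u t x ^ 4 + ε ^ 2 * dx u t x ^ 2) t x = _ := h1.deriv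
    rw [h2, dxdt hu, hs t ht x]
    norm_num
    ring


lemma pointwise {A ε β T p q r : ℝ} (hε : 0 < ε) (hβ : 0 < β) (hT : p ^ 2 ≤ T)
    (hc : A ^ 2 / 6 * β * (6 + (6 + 28 / 3 * |A|) * T) ≤ |A| * ε ^ 2) :
    2 * A * ε ^ 2 * (p * q * r) + 12 * (A ^ 2 / 6) * β * (p ^ 2 * q * r)
        - 28 / 3 * (A ^ 2 / 6) * A * β * (p ^ 3 * q * r)
        - 12 * (A ^ 2 / 6) * ε * (p * q) ^ 2 - 2 * ε ^ 3 * r ^ 2 ≤ -(1 / 2 * ε ^ 3 * r ^ 2) := by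
  set m := |p * q| * |r| with hm
  have hm0 : 0 ≤ m := by positivity
  have hpqr : |p * q * r| = m := abs_mul _ _
  have e1 : 2 * A * ε ^ 2 * (p * q * r) ≤ 2 * |A| * ε ^ 2 * m := by
    refine (le_abs_self _).trans (le_of_eq ?_)
    rw [abs_mul, hpqr, abs_mul, abs_mul]; simp
  have hp : |p| ≤ (1 + T) / 2 := by
    have := sq_abs p
    nlinarith [sq_nonneg (|p| - 1)]
  have e2 : 12 * (A ^ 2 / 6) * β * (p ^ 2 * q * r) ≤ A ^ 2 / 6 * β * (6 + 6 * T) * m := by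
    have h : p ^ 2 * q * r ≤ (1 + T) / 2 * m := by
      calc p ^ 2 * q * r = p * (p * q * r) := by ring
        _ ≤ |p * (p * q * r)| := le_abs_self _
        _ = |p| * m := by rw [abs_mul, hpqr]
        _ ≤ _ := by gcongr
    have := mul_le_mul_of_nonneg_left h (by positivity : 0 ≤ 12 * (A ^ 2 / 6) * β)
    linarith
  have e3 : - (28 / 3 * (A ^ 2 / 6) * A * β * (p ^ 3 * q * r))
      ≤ A ^ 2 / 6 * β * (28 / 3 * |A| * T) * m := by
    have h : -(A * (p ^ 3 * q * r)) ≤ |A| * (T * m) := by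
      calc -(A * (p ^ 3 * q * r)) ≤ |A * (p ^ 3 * q * r)| := neg_le_abs _
        _ = |A| * (p ^ 2 * m) := by
          rw [show p ^ 3 * q * r = p ^ 2 * (p * q * r) by ring, abs_mul, abs_mul, hpqr,
            abs_of_nonneg (sq_nonneg p)]
        _ ≤ _ := by gcongr
    have := mul_le_mul_of_nonneg_left h (by positivity : 0 ≤ 28 / 3 * (A ^ 2 / 6) * β)
    linarith
  have e4 := mul_le_mul_of_nonneg_right hc hm0
  have e5 : 3 * |A| * ε ^ 2 * m ≤ 2 * A ^ 2 * ε * (p * q) ^ 2 + 3 / 2 * ε ^ 3 * r ^ 2 := by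
    rw [← sq_abs A, ← sq_abs (p * q), ← sq_abs r]
    have h1 : 0 ≤ ε * (3 / 4 * (ε * |r|) - |A| * |p * q|) ^ 2 := by positivity
    have h2 : 0 ≤ ε ^ 3 * |r| ^ 2 := by positivity
    rw [hm]
    nlinarith
  linarith

lemma final_step {L T Y t : ℝ} {p r : ℝ → ℝ → ℝ} (ht : 0 ≤ t) (hL : 0 < L) (hT : 0 ≤ T)
    (hp : Continuous (Function.uncurry p)) (hr : Continuous (Function.uncurry r))
    (hb : ∀ s, 0 ≤ s → ∀ x, p s x ^ 2 ≤ T)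
    (hY : ∫ s in (0:ℝ)..t, ∫ x in (-L)..L, r s x ^ 2 ≤ Y) :
    ∫ s in (0:ℝ)..t, ∫ x in (-L)..L, (p s x * r s x) ^ 2 ≤ T * Y := by
  have c1 : Continuous (Function.uncurry fun s x => (p s x * r s x) ^ 2) := (hp.mul hr).pow 2
  have c2 : Continuous (Function.uncurry fun s x => r s x ^ 2) := hr.pow 2
  calc _ ≤ ∫ s in (0:ℝ)..t, T * ∫ x in (-L)..L, r s x ^ 2 := by
        refine intervalIntegral.integral_mono_on ht ((cont_int c1 _ _).intervalIntegrable _ _)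
          ((continuous_const.mul (cont_int c2 _ _)).intervalIntegrable _ _) fun s hs => ?_
        rw [← intervalIntegral.integral_const_mul]
        have c3 : Continuous (p s) := hp.comp (by fun_prop : Continuous fun x : ℝ => (s, x))
        have c4 : Continuous (r s) := hr.comp (by fun_prop : Continuous fun x : ℝ => (s, x))
        refine intervalIntegral.integral_mono_on (by linarith)
          ((by fun_prop : Continuous _).intervalIntegrable _ _)
          ((by fun_prop : Continuous _).intervalIntegrable _ _) fun x _ => ?_
        rw [mul_pow]
        exact mul_le_mul_of_nonneg_right (hb s hs.1 x) (sq_nonneg _)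
    _ = T * ∫ s in (0:ℝ)..t, ∫ x in (-L)..L, r s x ^ 2 := by
        rw [intervalIntegral.integral_const_mul]
    _ ≤ _ := by gcongr

lemma main {A C₀ ε β L K ε₀ : ℝ} {u : ℝ → ℝ → ℝ} (hA : A ≠ 0) (hC : 0 < C₀) (hε : 0 < ε)
    (hβ : 0 < β) (hL : 0 < L)
    (hu : ContDiff ℝ ∞ (Function.uncurry u))
    (hs : Sol A ε β u) (z0 : ∀ t x : ℝ, L ≤ |x| → u t x = 0)
    (z1 : ∀ t x : ℝ, L ≤ |x| → dx u t x = 0) (z2 : ∀ t x : ℝ, L ≤ |x| → dx (dx u) t x = 0)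
    (hi : (∫ x in (-L)..L, u 0 x ^ 2) + (∫ x in (-L)..L, u 0 x ^ 4)
      + (β + ε ^ 2) * (∫ x in (-L)..L, dx u 0 x ^ 2) ≤ C₀)
    (hb : β ≤ ε ^ 4 / (Real.sqrt C₀ * A ^ 2))
    (hK : K = C₀ + 2 * ((A ^ 2 / 6 + 1) * C₀))
    (hε₀ : ε₀ = min 1 (|A| * Real.sqrt C₀ / (1 + (6 + 28 / 3 * |A|) * K)))
    (t : ℝ) (ht : 0 ≤ t) :
    β ^ 2 * (∫ s in (0:ℝ)..t, ∫ x in (-L)..L, (u s x * dx (dx u) s x) ^ 2) ≤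
      (2 * K * ((A ^ 2 / 6 + 1) * C₀) / (C₀ * A ^ 4)
        + Real.sqrt (1 / (Real.sqrt C₀ * A ^ 2)) * C₀ ^ 2 / (2 * ε₀ ^ 2)) * ε ^ 3 := by
  have hA2 : 0 < A ^ 2 := by positivity
  have hAa : 0 < |A| := abs_pos.2 hA
  have hsq : 0 < Real.sqrt C₀ := Real.sqrt_pos.2 hC
  have hKpos : 0 < K := by rw [hK]; positivity
  have hε₀pos : 0 < ε₀ := by rw [hε₀]; positivity
  have hq := dx_smooth hu
  have hr := dx_smooth hq
  have ii : ∀ (f : ℝ → ℝ), Continuous f → IntervalIntegrable f volume (-L) L :=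
    fun f hf => hf.intervalIntegrable _ _
  have nn : ∀ (f : ℝ → ℝ), (∀ x, 0 ≤ f x) → 0 ≤ ∫ x in (-L)..L, f x :=
    fun f hf => intervalIntegral.integral_nonneg (by linarith) fun x _ => hf x
  set P2 : ℝ → ℝ := fun s => ∫ x in (-L)..L, u s x ^ 2 with hP2
  set P4 : ℝ → ℝ := fun s => ∫ x in (-L)..L, u s x ^ 4 with hP4
  set X : ℝ → ℝ := fun s => ∫ x in (-L)..L, dx u s x ^ 2 with hX
  set Q : ℝ → ℝ := fun s => ∫ x in (-L)..L, dx (dx u) s x ^ 2 with hQ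
  have hP2n : ∀ s, 0 ≤ P2 s := fun s => nn _ fun x => sq_nonneg _
  have hP4n : ∀ s, 0 ≤ P4 s := fun s => nn _ fun x => by positivity
  have hXn : ∀ s, 0 ≤ X s := fun s => nn _ fun x => sq_nonneg _
  have hQn : ∀ s, 0 ≤ Q s := fun s => nn _ fun x => sq_nonneg _
  have hQc : Continuous Q := by
    have : Continuous (Function.uncurry fun s x => dx (dx u) s x ^ 2) := hr.continuous.pow 2
    exact cont_int this _ _
  have hXc : Continuous X := by
    have : Continuous (Function.uncurry fun s x => dx u s x ^ 2) := hq.continuous.pow 2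
    exact cont_int this _ _
  replace hi : P2 0 + P4 0 + (β + ε ^ 2) * X 0 ≤ C₀ := hi
  have sup : ∀ s l, 0 < l → ∀ x, u s x ^ 2 ≤ l * P2 s + (1 / l) * X s := fun s l hl x =>
    sup_bound hl (hdx hu s) (fix_t hq s) (z0 s) hL x
  -- first energy
  have hE1 : ∀ s, 0 ≤ s → HasDerivAt (fun s => P2 s + β * X s)
      (-(2 * ε * X s + 2 * β * ε * Q s)) s := by
    intro s hs0
    have cp := fix_t hu s
    have cq := fix_t hq s
    have cr := fix_t hr s
    have h := energy1 hu hs z0 z1 z2 s hs0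
    refine (h.congr_deriv ?_).congr_of_eventuallyEq (Filter.Eventually.of_forall fun τ => ?_)
    · rw [intervalIntegral.integral_neg, intervalIntegral.integral_add (ii _ (by fun_prop))
        (ii _ (by fun_prop)), intervalIntegral.integral_const_mul,
        intervalIntegral.integral_const_mul]
    · have cp := fix_t hu τ
      have cq := fix_t hq τ
      simp only []
      rw [intervalIntegral.integral_add (ii _ (by fun_prop))
        (ii _ (by fun_prop)), intervalIntegral.integral_const_mul]
  have I1 : ∀ t, 0 ≤ t → P2 t + β * X t + ∫ s in (0:ℝ)..t, 2 * β * ε * Q s ≤ C₀ := by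
    intro t ht
    have h := integrate (h := fun s => 2 * β * ε * Q s) ht hE1 (by fun_prop) (fun s _ => by
      have : 0 ≤ 2 * ε * X s := mul_nonneg (by positivity) (hXn s)
      linarith)
    have : 0 ≤ ε ^ 2 * X 0 := mul_nonneg (by positivity) (hXn 0)
    have h4 := hP4n 0
    nlinarith
  have IQn : ∀ t, 0 ≤ t → 0 ≤ ∫ s in (0:ℝ)..t, Q s :=
    fun t ht => intervalIntegral.integral_nonneg ht fun s _ => hQn s
  simp only [intervalIntegral.integral_const_mul] at I1
  have B1 : ∀ s, 0 ≤ s → P2 s + β * X s ≤ C₀ := fun s hs0 => by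
    have h1 := I1 s hs0
    have h2 : 0 ≤ 2 * β * ε * ∫ r in (0:ℝ)..s, Q r := mul_nonneg (by positivity) (IQn s hs0)
    linarith
  have M1n : 0 ≤ 2 * K * ((A ^ 2 / 6 + 1) * C₀) / (C₀ * A ^ 4) := by positivity
  have M2n : 0 ≤ Real.sqrt (1 / (Real.sqrt C₀ * A ^ 2)) * C₀ ^ 2 / (2 * ε₀ ^ 2) := by positivity
  have hε3 : 0 < ε ^ 3 := by positivity
  by_cases hcase : ε₀ ≤ ε
  · -- large ε
    set b := Real.sqrt β with hbdef
    have hb0 : 0 < b := Real.sqrt_pos.2 hβ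
    have hbb : b ^ 2 = β := Real.sq_sqrt hβ.le
    have hbk : b ≤ ε ^ 2 * Real.sqrt (1 / (Real.sqrt C₀ * A ^ 2)) := by
      rw [hbdef]
      apply Real.sqrt_le_iff.2
      refine ⟨by positivity, hb.trans (le_of_eq ?_)⟩
      rw [mul_pow, Real.sq_sqrt (by positivity)]
      ring
    have hT : ∀ s, 0 ≤ s → ∀ x, u s x ^ 2 ≤ C₀ / b := by
      intro s hs0 x
      have h := sup s (1 / b) (by positivity) x
      refine h.trans ?_
      rw [le_div_iff₀ hb0]
      have h1 := B1 s hs0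
      have : (1 / b * P2 s + 1 / (1 / b) * X s) * b = P2 s + b ^ 2 * X s := by
        field_simp
      rw [this, hbb]; exact h1
    have hY : ∫ s in (0:ℝ)..t, Q s ≤ C₀ / (2 * β * ε) := by
      rw [le_div_iff₀ (by positivity)]
      have h1 := I1 t ht
      have h2 := hP2n t
      have h3 : 0 ≤ β * X t := mul_nonneg hβ.le (hXn t)
      linarith
    have h := final_step ht hL (by positivity) hu.continuous hr.continuous hT hY
    calc _ ≤ β ^ 2 * (C₀ / b * (C₀ / (2 * β * ε))) := by gcongr
      _ = b * (C₀ ^ 2 / (2 * ε)) := by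
        rw [← hbb]; field_simp
      _ ≤ (ε ^ 2 * Real.sqrt (1 / (Real.sqrt C₀ * A ^ 2))) * (C₀ ^ 2 / (2 * ε)) := by gcongr
      _ = Real.sqrt (1 / (Real.sqrt C₀ * A ^ 2)) * C₀ ^ 2 / (2 * ε₀ ^ 2) * (ε * ε₀ ^ 2) := by
        field_simp
      _ ≤ Real.sqrt (1 / (Real.sqrt C₀ * A ^ 2)) * C₀ ^ 2 / (2 * ε₀ ^ 2) * ε ^ 3 := by
        gcongr
        calc ε * ε₀ ^ 2 ≤ ε * ε ^ 2 := by gcongr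
          _ = ε ^ 3 := by ring
      _ ≤ _ := by
        gcongr
        linarith
  · push Not at hcase
    set F₀ := (A ^ 2 / 6 + 1) * C₀ with hF₀
    have hF₀pos : 0 < F₀ := by positivity
    have he1 : ε ≤ 1 := by
      have : ε₀ ≤ 1 := by rw [hε₀]; exact min_le_left _ _
      linarith
    have he2 : ε * (1 + (6 + 28 / 3 * |A|) * K) ≤ |A| * Real.sqrt C₀ := by
      rw [← le_div_iff₀ (by positivity)]
      have : ε₀ ≤ |A| * Real.sqrt C₀ / (1 + (6 + 28 / 3 * |A|) * K) := by
        rw [hε₀]; exact min_le_right _ _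
      linarith
    have hb' : A ^ 2 * β ≤ ε ^ 4 / Real.sqrt C₀ := by
      calc A ^ 2 * β ≤ A ^ 2 * (ε ^ 4 / (Real.sqrt C₀ * A ^ 2)) := by gcongr
        _ = _ := by field_simp
    have hc : A ^ 2 / 6 * β * (6 + (6 + 28 / 3 * |A|) * (K / ε)) ≤ |A| * ε ^ 2 := by
      set K2 := (6 + 28 / 3 * |A|) * K with hK2
      have hK2n : 0 ≤ K2 := by positivity
      calc A ^ 2 / 6 * β * (6 + (6 + 28 / 3 * |A|) * (K / ε))
          = (A ^ 2 * β) * ((1 + K2 / 6 / ε)) := by rw [hK2]; ring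
        _ ≤ (ε ^ 4 / Real.sqrt C₀) * ((1 + K2) / ε) := by
          gcongr
          rw [add_div]
          have : 1 ≤ 1 / ε := by rw [le_div_iff₀ hε]; linarith
          have h2 : K2 / 6 / ε ≤ K2 / ε := by gcongr; linarith
          linarith
        _ = ε ^ 2 * ((ε * (1 + K2)) / Real.sqrt C₀) := by field_simp
        _ ≤ ε ^ 2 * |A| := by
          gcongr
          rw [div_le_iff₀ hsq]; exact he2
        _ = _ := by ring
    set Φ : ℝ → ℝ := fun s => ∫ x in (-L)..L, (A ^ 2 / 6 * u s x ^ 4 + ε ^ 2 * dx u s x ^ 2) with hΦ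
    have hΦe : ∀ s, Φ s = A ^ 2 / 6 * P4 s + ε ^ 2 * X s := by
      intro s
      have cp := fix_t hu s
      have cq := fix_t hq s
      simp only [hΦ]
      rw [intervalIntegral.integral_add (ii _ (by fun_prop))
        (ii _ (by fun_prop)), intervalIntegral.integral_const_mul,
        intervalIntegral.integral_const_mul]
    have hE2 := energy2 (a := A ^ 2 / 6) hu hs z0 z1 z2
    have hT : ∀ s, 0 ≤ s → Φ s ≤ 2 * F₀ → ∀ x, u s x ^ 2 ≤ K / ε := by
      intro s hs0 hle x
      refine (sup s (1 / ε) (by positivity) x).trans ?_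
      rw [le_div_iff₀ hε]
      have h1 := B1 s hs0
      have h2 : 0 ≤ β * X s := mul_nonneg hβ.le (hXn s)
      have h3 : 0 ≤ A ^ 2 / 6 * P4 s := mul_nonneg (by positivity) (hP4n s)
      have : (1 / ε * P2 s + 1 / (1 / ε) * X s) * ε = P2 s + ε ^ 2 * X s := by
        field_simp
      rw [this, hK]
      rw [hΦe] at hle
      linarith
    have hD : ∀ s, 0 ≤ s → Φ s ≤ 2 * F₀ → (∫ x in (-L)..L,
        (2 * A * ε ^ 2 * (u s x * dx u s x * dx (dx u) s x)
        + 12 * (A ^ 2 / 6) * β * (u s x ^ 2 * dx u s x * dx (dx u) s x)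
        - 28 / 3 * (A ^ 2 / 6) * A * β * (u s x ^ 3 * dx u s x * dx (dx u) s x)
        - 12 * (A ^ 2 / 6) * ε * (u s x * dx u s x) ^ 2 - 2 * ε ^ 3 * dx (dx u) s x ^ 2))
        ≤ -(1 / 2 * ε ^ 3 * Q s) := by
      intro s hs0 hle
      have cp := fix_t hu s
      have cq := fix_t hq s
      have cr := fix_t hr s
      have e : -(1 / 2 * ε ^ 3 * Q s) = ∫ x in (-L)..L, -(1 / 2 * ε ^ 3 * dx (dx u) s x ^ 2) := by
        rw [intervalIntegral.integral_neg, intervalIntegral.integral_const_mul]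
      rw [e]
      exact intervalIntegral.integral_mono_on (by linarith) (ii _ (by fun_prop))
        (ii _ (by fun_prop)) fun x _ => pointwise hε hβ (hT s hs0 hle x) hc
    have hΦ0 : Φ 0 ≤ F₀ := by
      rw [hΦe, hF₀]
      have h1 := hP2n 0
      have h2 := hP4n 0
      have h3 : 0 ≤ β * X 0 := mul_nonneg hβ.le (hXn 0)
      have h4 : 0 ≤ ε ^ 2 * X 0 := mul_nonneg (by positivity) (hXn 0)
      have h5 : P4 0 ≤ C₀ := by linarith
      have h6 : ε ^ 2 * X 0 ≤ C₀ := by linarith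
      have : A ^ 2 / 6 * P4 0 ≤ A ^ 2 / 6 * C₀ := by gcongr
      linarith
    have hB := bootstrap hF₀pos hE2 hΦ0 (fun s hs0 hle => (hD s hs0 hle).trans (by
      have := mul_nonneg (by positivity : 0 ≤ 1 / 2 * ε ^ 3) (hQn s)
      linarith))
    have hI := integrate (h := fun s => 1 / 2 * ε ^ 3 * Q s) ht hE2 (by fun_prop)
      (fun s hs0 => hD s hs0 (hB s hs0))
    rw [intervalIntegral.integral_const_mul] at hI
    have hY : ∫ s in (0:ℝ)..t, Q s ≤ 2 * F₀ / ε ^ 3 := by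
      rw [le_div_iff₀ hε3]
      have h1 : 0 ≤ Φ t := by
        rw [hΦe]
        have h3 : 0 ≤ A ^ 2 / 6 * P4 t := mul_nonneg (by positivity) (hP4n t)
        have h4 : 0 ≤ ε ^ 2 * X t := mul_nonneg (by positivity) (hXn t)
        linarith
      have h2 : Φ t + 1 / 2 * ε ^ 3 * ∫ s in (0:ℝ)..t, Q s ≤ Φ 0 := hI
      linarith
    have h := final_step ht hL (by positivity) hu.continuous hr.continuous
      (fun s hs0 => hT s hs0 (hB s hs0)) hY
    calc _ ≤ β ^ 2 * (K / ε * (2 * F₀ / ε ^ 3)) := by gcongr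
      _ ≤ (ε ^ 4 / (Real.sqrt C₀ * A ^ 2)) ^ 2 * (K / ε * (2 * F₀ / ε ^ 3)) := by gcongr
      _ = 2 * K * F₀ / (C₀ * A ^ 4) * ε ^ 4 := by
        rw [div_pow, mul_pow, Real.sq_sqrt hC.le]
        field_simp
      _ ≤ 2 * K * F₀ / (C₀ * A ^ 4) * ε ^ 3 := by
        gcongr ?_ * ?_
        exact pow_le_pow_of_le_one hε.le he1 (by norm_num)
      _ ≤ _ := by
        gcongr
        linarith

end KS

/-- Estimate `β² ∫₀ᵗ ‖u ∂ₓ²u‖²_{L²} ds ≤ M ε³`. -/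
theorem stmt_12 (A C₀ : ℝ) (hA : A ≠ 0) (hC₀pos : 0 < C₀) :
    ∃ M : ℝ, 0 < M ∧
      ∀ (ε β : ℝ) (u : ℝ → ℝ → ℝ),
        0 < ε → 0 < β →
        ContDiff ℝ (⊤ : ℕ∞) (Function.uncurry u) →
        (∃ R > (0:ℝ), ∀ t x : ℝ, R ≤ |x| → u t x = 0) →
        (∀ t : ℝ, 0 ≤ t → ∀ x : ℝ,
          deriv (fun τ => u τ x) t
            + A * u t x * deriv (u t) x
            + β * deriv (deriv (deriv (u t))) x
            - (2 * A / 3) * β * deriv (fun y => u t y * deriv (deriv (u t)) y) x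
            - (-(A / 3)) * β * deriv (u t) x * deriv (deriv (u t)) x
            - ε * deriv (deriv (u t)) x = 0) →
        ((∫ x : ℝ, (u 0 x) ^ 2) + (∫ x : ℝ, (u 0 x) ^ 4)
            + (β + ε ^ 2) * (∫ x : ℝ, (deriv (u 0) x) ^ 2) ≤ C₀) →
        β ≤ ε ^ 4 / (Real.sqrt C₀ * A ^ 2) →
        ∀ t : ℝ, 0 ≤ t →
          β ^ 2 * (∫ s in (0:ℝ)..t, ∫ x : ℝ, (u s x * deriv (deriv (u s)) x) ^ 2) ≤ M * ε ^ 3 := by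
  obtain ⟨K, hK⟩ : ∃ K, K = C₀ + 2 * ((A ^ 2 / 6 + 1) * C₀) := ⟨_, rfl⟩
  obtain ⟨ε₀, hε₀⟩ : ∃ ε₀, ε₀ = min 1 (|A| * Real.sqrt C₀ / (1 + (6 + 28 / 3 * |A|) * K)) :=
    ⟨_, rfl⟩
  have hAa : 0 < |A| := abs_pos.2 hA
  have hsq : 0 < Real.sqrt C₀ := Real.sqrt_pos.2 hC₀pos
  have hKpos : 0 < K := by rw [hK]; positivity
  have hε₀pos : 0 < ε₀ := by rw [hε₀]; positivity
  refine ⟨2 * K * ((A ^ 2 / 6 + 1) * C₀) / (C₀ * A ^ 4)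
        + Real.sqrt (1 / (Real.sqrt C₀ * A ^ 2)) * C₀ ^ 2 / (2 * ε₀ ^ 2), by positivity, ?_⟩
  intro ε β u hε hβ hu hR hpde hi hb t ht
  obtain ⟨R, hR0, hR⟩ := hR
  have y0 : ∀ t x : ℝ, R < |x| → u t x = 0 := fun t x hx => hR t x hx.le
  have y1 := KS.dx_zero y0
  have y2 := KS.dx_zero y1
  have z0 : ∀ t x : ℝ, R + 1 ≤ |x| → u t x = 0 := fun t x hx => y0 t x (by linarith)
  have z1 : ∀ t x : ℝ, R + 1 ≤ |x| → KS.dx u t x = 0 := fun t x hx => y1 t x (by linarith)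
  have z2 : ∀ t x : ℝ, R + 1 ≤ |x| → KS.dx (KS.dx u) t x = 0 :=
    fun t x hx => y2 t x (by linarith)
  have hL : 0 < R + 1 := by linarith
  have hq := KS.dx_smooth hu
  have hr := KS.dx_smooth hq
  have hs : KS.Sol A ε β u := by
    intro t ht x
    have h := hpde t ht x
    have h1 : deriv (fun y => u t y * deriv (deriv (u t)) y) x
        = KS.dx u t x * KS.dx (KS.dx u) t x + u t x * KS.dx (KS.dx (KS.dx u)) t x :=
      ((KS.hdx hu t x).fun_mul (KS.hdx hr t x)).deriv
    rw [h1] at h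
    change KS.dt u t x + A * u t x * KS.dx u t x + β * KS.dx (KS.dx (KS.dx u)) t x
      - 2 * A / 3 * β * (KS.dx u t x * KS.dx (KS.dx u) t x
        + u t x * KS.dx (KS.dx (KS.dx u)) t x)
      - -(A / 3) * β * KS.dx u t x * KS.dx (KS.dx u) t x - ε * KS.dx (KS.dx u) t x = 0 at h
    linear_combination h
  rw [KS.int_eq (L := R + 1) (fun x hx => by rw [z0 0 x hx]; simp),
    KS.int_eq (L := R + 1) (fun x hx => by rw [z0 0 x hx]; simp),
    KS.int_eq (L := R + 1) (fun x hx => by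
      have : deriv (u 0) x = 0 := z1 0 x hx
      rw [this]; simp)] at hi
  have e : ∀ s, ∫ x : ℝ, (u s x * deriv (deriv (u s)) x) ^ 2
      = ∫ x in (-(R + 1))..(R + 1), (u s x * KS.dx (KS.dx u) s x) ^ 2 := fun s =>
    KS.int_eq (L := R + 1) (fun x hx => by rw [z0 s x hx]; simp)
  simp_rw [e]
  exact KS.main hA hC₀pos hε hβ hL hu hs z0 z1 z2 hi hb hK hε₀ t ht
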